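/- Let a > b > 0, c = √(a² − b²), and β = a²/c². Let r : ℝ → ℝ be continuous, 2π-periodic, even (r(−ϑ) = r(ϑ) for all ϑ), and satisfying r(π − ϑ) = r(ϑ) for all ϑ. Suppose that for every α ∈ (0,1), ∫_{{ϑ ∈ [0,2π) : cos²ϑ < α}} r(ϑ) · (β − cos²ϑ)^{−1/2} · (α − cos²ϑ)^{−1/2} dϑ = 0. Then r(ϑ) = 0 for every ϑ. -/

import Mathlib

open Real MeasureTheory

/-!
The hypothesis says that the Abel transform of the weighted variation, taken along the level sets
of `cos²`, vanishes. Up to a constant, that transform is the fractional integral of order `1/2`,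
in the variable `α`, of the distribution of the weighted variation with respect to `cos²`.
Fractional integrals form a semigroup, so integrating once more to order `1/2` gives an ordinary
integral: the variation has zero weighted integral over every sublevel set `{cos² < γ}`. By symmetry
such a set is four copies of an interval `(ϑ, π / 2)`, and differentiating in `ϑ` recovers the
integrand.
-/

section RiemannLiouville

/-- The Riemann–Liouville kernel `t₊ ^ (s - 1) / Γ(s)`, convolution with which is fractional
integration of order `s`. The indicator fixes the value `0` for `t ≤ 0`, where `rpow` follows its
own convention. -/
noncomputable def riemannLiouvilleKernel (s : ℝ) : ℝ → ℝ :=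
  (Set.Ioi 0).indicator fun t => t ^ (s - 1) / Real.Gamma s

variable {s u t : ℝ}

lemma riemannLiouvilleKernel_of_pos (ht : 0 < t) :
    riemannLiouvilleKernel s t = t ^ (s - 1) / Real.Gamma s :=
  Set.indicator_of_mem ht _

lemma riemannLiouvilleKernel_of_nonpos (ht : t ≤ 0) : riemannLiouvilleKernel s t = 0 :=
  Set.indicator_of_notMem ht.not_gt _

lemma riemannLiouvilleKernel_pos (hs : 0 < s) (ht : 0 < t) : 0 < riemannLiouvilleKernel s t := by
  rw [riemannLiouvilleKernel_of_pos ht]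
  exact div_pos (rpow_pos_of_pos ht _) (Real.Gamma_pos_of_pos hs)

lemma riemannLiouvilleKernel_nonneg (hs : 0 < s) (t : ℝ) : 0 ≤ riemannLiouvilleKernel s t := by
  rcases le_or_gt t 0 with ht | ht
  · exact (riemannLiouvilleKernel_of_nonpos ht).ge
  · exact (riemannLiouvilleKernel_pos hs ht).le

lemma riemannLiouvilleKernel_one : riemannLiouvilleKernel 1 = (Set.Ioi 0).indicator 1 := by
  ext t
  simp [riemannLiouvilleKernel, Set.indicator]

@[fun_prop]
lemma measurable_riemannLiouvilleKernel (s : ℝ) : Measurable (riemannLiouvilleKernel s) :=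
  Measurable.indicator (by fun_prop) measurableSet_Ioi

lemma riemannLiouvilleKernel_sub_mul_sub_eq_zero {y z : ℝ} (ht : t ∉ Set.Ioo y z) :
    riemannLiouvilleKernel s (t - y) * riemannLiouvilleKernel u (z - t) = 0 := by
  rw [Set.mem_Ioo, not_and_or, not_lt, not_lt] at ht
  rcases ht with ht | ht
  · rw [riemannLiouvilleKernel_of_nonpos (sub_nonpos.2 ht), zero_mul]
  · rw [riemannLiouvilleKernel_of_nonpos (sub_nonpos.2 ht), mul_zero]

lemma integral_rpow_mul_sub_rpow (hs : 0 < s) (hu : 0 < u) (ht : 0 < t) :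
    ∫ x in (0 : ℝ)..t, x ^ (s - 1) * (t - x) ^ (u - 1) =
      t ^ (s + u - 1) * ProbabilityTheory.beta s u := by
  have hbeta : Complex.betaIntegral s u = ProbabilityTheory.beta s u := by
    rw [Complex.betaIntegral_eq_Gamma_mul_div _ _ (by simpa) (by simpa), ProbabilityTheory.beta]
    simp only [← Complex.ofReal_add, Complex.Gamma_ofReal]
    norm_cast
  have hscaled := Complex.betaIntegral_scaled (s : ℂ) (u : ℂ) ht
  rw [hbeta] at hscaled
  rw [← Complex.ofReal_inj, ← intervalIntegral.integral_ofReal, Complex.ofReal_mul,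
    Complex.ofReal_cpow ht.le]
  push_cast
  rw [← hscaled]
  refine intervalIntegral.integral_congr fun x hx => ?_
  rw [Set.uIcc_of_le ht.le] at hx
  simp only [Complex.ofReal_cpow hx.1, Complex.ofReal_cpow (sub_nonneg.2 hx.2)]
  push_cast
  rfl

lemma integral_riemannLiouvilleKernel_mul_sub (hs : 0 < s) (hu : 0 < u) (t : ℝ) :
    ∫ x, riemannLiouvilleKernel s x * riemannLiouvilleKernel u (t - x) =
      riemannLiouvilleKernel (s + u) t := by
  have hsupport : ∀ x ∉ Set.Ioo 0 t,
      riemannLiouvilleKernel s x * riemannLiouvilleKernel u (t - x) = 0 := fun x hx => by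
    simpa only [sub_zero] using riemannLiouvilleKernel_sub_mul_sub_eq_zero (s := s) (u := u) hx
  rw [← setIntegral_eq_integral_of_forall_compl_eq_zero hsupport]
  rcases le_or_gt t 0 with ht | ht
  · rw [Set.Ioo_eq_empty ht.not_gt, setIntegral_empty, riemannLiouvilleKernel_of_nonpos ht]
  calc ∫ x in Set.Ioo 0 t, riemannLiouvilleKernel s x * riemannLiouvilleKernel u (t - x)
      = ∫ x in Set.Ioo 0 t,
          x ^ (s - 1) * (t - x) ^ (u - 1) / (Real.Gamma s * Real.Gamma u) := by
        refine setIntegral_congr_fun measurableSet_Ioo fun x hx => ?_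
        simp only [riemannLiouvilleKernel_of_pos hx.1,
          riemannLiouvilleKernel_of_pos (sub_pos.2 hx.2), div_mul_div_comm]
    _ = t ^ (s + u - 1) * ProbabilityTheory.beta s u / (Real.Gamma s * Real.Gamma u) := by
        rw [integral_div, ← integral_Ioc_eq_integral_Ioo,
          ← intervalIntegral.integral_of_le ht.le, integral_rpow_mul_sub_rpow hs hu ht]
    _ = riemannLiouvilleKernel (s + u) t := by
        rw [riemannLiouvilleKernel_of_pos ht, ProbabilityTheory.beta]
        have := (Real.Gamma_pos_of_pos hs).ne'
        have := (Real.Gamma_pos_of_pos hu).ne'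
        field_simp

lemma integral_riemannLiouvilleKernel_sub_mul_sub (hs : 0 < s) (hu : 0 < u) (y z : ℝ) :
    ∫ t, riemannLiouvilleKernel s (t - y) * riemannLiouvilleKernel u (z - t) =
      riemannLiouvilleKernel (s + u) (z - y) := by
  rw [← integral_riemannLiouvilleKernel_mul_sub hs hu,
    ← integral_sub_right_eq_self (fun t => riemannLiouvilleKernel s t *
      riemannLiouvilleKernel u (z - y - t)) y]
  simp only [sub_sub_sub_cancel_right]

lemma integrable_riemannLiouvilleKernel_sub_mul_sub (hs : 0 < s) (hu : 0 < u) (y z : ℝ) :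
    Integrable fun t => riemannLiouvilleKernel s (t - y) * riemannLiouvilleKernel u (z - t) := by
  rcases lt_or_ge y z with hyz | hyz
  · refine .of_integral_ne_zero ?_
    rw [integral_riemannLiouvilleKernel_sub_mul_sub hs hu]
    exact (riemannLiouvilleKernel_pos (add_pos hs hu) (sub_pos.2 hyz)).ne'
  · refine (integrable_zero ℝ ℝ volume).congr (.of_forall fun t => ?_)
    exact (riemannLiouvilleKernel_sub_mul_sub_eq_zero fun ht => (ht.1.trans ht.2).not_ge hyz).symm

end RiemannLiouville

section AbelTransform

variable {X E : Type*} [MeasurableSpace X] [NormedAddCommGroup E] [NormedSpace ℝ E]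
  {μ : Measure X} {q : X → ℝ} {g : X → E} {s u γ : ℝ}

/-- The Abel transform of order `s` of `g` along the level sets of `q`, that is, the fractional
integral of order `s` of the push-forward under `q` of the vector measure `g μ`. -/
noncomputable def abelTransform (s : ℝ) (μ : Measure X) (q : X → ℝ) (g : X → E) (t : ℝ) : E :=
  ∫ x, riemannLiouvilleKernel s (t - q x) • g x ∂μ

lemma abelTransform_eq_inv_Gamma_smul_setIntegral (s : ℝ) (μ : Measure X) (hq : Measurable q)
    (g : X → E) (t : ℝ) :
    abelTransform s μ q g t =
      (Real.Gamma s)⁻¹ • ∫ x in {x | q x < t}, (t - q x) ^ (s - 1) • g x ∂μ := by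
  rw [← integral_smul, ← integral_indicator (measurableSet_lt hq measurable_const)]
  refine integral_congr_ae (.of_forall fun x => ?_)
  by_cases hx : q x < t
  · simp [hx, riemannLiouvilleKernel_of_pos (sub_pos.2 hx), smul_smul, div_eq_inv_mul]
  · simp [hx, riemannLiouvilleKernel_of_nonpos (sub_nonpos.2 (not_lt.1 hx))]

lemma abelTransform_one (μ : Measure X) (hq : Measurable q) (g : X → E) (t : ℝ) :
    abelTransform 1 μ q g t = ∫ x in {x | q x < t}, g x ∂μ := by
  simp [abelTransform_eq_inv_Gamma_smul_setIntegral 1 μ hq]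

lemma abelTransform_eq_zero_of_forall_le {t : ℝ} (h : ∀ x, t ≤ q x) :
    abelTransform s μ q g t = 0 := by
  simp [abelTransform, riemannLiouvilleKernel_of_nonpos (sub_nonpos.2 (h _))]

lemma integrable_prod_riemannLiouvilleKernel_mul_smul [SFinite μ] (hs : 0 < s) (hu : 0 < u)
    (hq : Measurable q) (hg : AEStronglyMeasurable g μ)
    (hint : Integrable (fun x => riemannLiouvilleKernel (s + u) (γ - q x) • g x) μ) :
    Integrable (fun p : ℝ × X => (riemannLiouvilleKernel s (p.1 - q p.2) *
      riemannLiouvilleKernel u (γ - p.1)) • g p.2) (volume.prod μ) := by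
  have hkernel : Measurable fun p : ℝ × X =>
      riemannLiouvilleKernel s (p.1 - q p.2) * riemannLiouvilleKernel u (γ - p.1) := by
    fun_prop
  refine (integrable_prod_iff' (hkernel.aestronglyMeasurable.smul hg.comp_snd)).2 ?_
  constructor
  · filter_upwards with x
    exact (integrable_riemannLiouvilleKernel_sub_mul_sub hs hu (q x) γ).smul_const (g x)
  · simpa only [Pi.smul_apply', norm_smul, norm_mul,
      norm_of_nonneg (riemannLiouvilleKernel_nonneg hs _),
      norm_of_nonneg (riemannLiouvilleKernel_nonneg hu _),
      norm_of_nonneg (riemannLiouvilleKernel_nonneg (add_pos hs hu) _), integral_mul_const,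
      integral_riemannLiouvilleKernel_sub_mul_sub hs hu] using hint.norm

lemma integral_riemannLiouvilleKernel_smul_abelTransform [CompleteSpace E] [SFinite μ]
    (hs : 0 < s) (hu : 0 < u) (hq : Measurable q) (hg : AEStronglyMeasurable g μ)
    (hint : Integrable (fun x => riemannLiouvilleKernel (s + u) (γ - q x) • g x) μ) :
    ∫ t, riemannLiouvilleKernel u (γ - t) • abelTransform s μ q g t =
      abelTransform (s + u) μ q g γ :=
  calc ∫ t, riemannLiouvilleKernel u (γ - t) • abelTransform s μ q g t
      = ∫ t, ∫ x, (riemannLiouvilleKernel s (t - q x) *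
          riemannLiouvilleKernel u (γ - t)) • g x ∂μ := by
        simp only [abelTransform, ← integral_smul, smul_smul, mul_comm]
    _ = ∫ x, (∫ t, (riemannLiouvilleKernel s (t - q x) *
          riemannLiouvilleKernel u (γ - t)) • g x) ∂μ :=
        integral_integral_swap (integrable_prod_riemannLiouvilleKernel_mul_smul hs hu hq hg hint)
    _ = abelTransform (s + u) μ q g γ := by
        simp only [integral_smul_const, integral_riemannLiouvilleKernel_sub_mul_sub hs hu,
          abelTransform]

lemma setIntegral_sublevel_eq_zero_of_abelTransform_eq_zero [CompleteSpace E] [SFinite μ]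
    (hs : s ∈ Set.Ioo 0 1) (hq : Measurable q) (hg : Integrable g μ)
    (h : ∀ t < γ, abelTransform s μ q g t = 0) : ∫ x in {x | q x < γ}, g x ∂μ = 0 := by
  have hint : Integrable (fun x => riemannLiouvilleKernel (s + (1 - s)) (γ - q x) • g x) μ := by
    rw [add_sub_cancel]
    refine hg.bdd_smul 1 (Measurable.aestronglyMeasurable (by fun_prop)) (.of_forall fun x => ?_)
    rw [riemannLiouvilleKernel_one]
    exact (norm_indicator_le_norm_self _ _).trans (by simp)
  have hsemigroup := integral_riemannLiouvilleKernel_smul_abelTransform hs.1 (sub_pos.2 hs.2) hq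
    hg.aestronglyMeasurable hint
  rw [add_sub_cancel, abelTransform_one μ hq] at hsemigroup
  rw [← hsemigroup]
  refine integral_eq_zero_of_ae (.of_forall fun t => ?_)
  rcases lt_or_ge t γ with ht | ht
  · simp [h t ht]
  · simp [riemannLiouvilleKernel_of_nonpos (sub_nonpos.2 ht)]

end AbelTransform

section Symmetry

lemma periodic_of_even_of_reflect {G α : Type*} [AddCommGroup G] {f : G → α} {c : G}
    (heven : ∀ x, f (-x) = f x) (hrefl : ∀ x, f (c - x) = f x) : Function.Periodic f c :=
  fun x => by rw [← heven x, ← hrefl (-x), sub_neg_eq_add, add_comm]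

lemma eq_zero_of_eqOn_zero_of_even_of_reflect {α : Type*} [Zero α] {f : ℝ → α} {c : ℝ}
    (hc : 0 < c) (heven : ∀ x, f (-x) = f x) (hrefl : ∀ x, f (c - x) = f x)
    (h : Set.EqOn f 0 (Set.Icc 0 (c / 2))) : f = 0 := by
  ext x
  obtain ⟨y, hy, hxy⟩ := (periodic_of_even_of_reflect heven hrefl).exists_mem_Ico₀ hc x
  rw [hxy]
  rcases le_total y (c / 2) with hyc | hyc
  · exact h ⟨hy.1, hyc⟩
  · rw [← hrefl]
    exact h ⟨by linarith [hy.2], by linarith⟩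

variable {E : Type*} [NormedAddCommGroup E] [NormedSpace ℝ E] {f : ℝ → E}

lemma integral_eq_two_smul_of_reflect {c : ℝ} (hf : IntervalIntegrable f volume 0 (c / 2))
    (hrefl : ∀ x, f (c - x) = f x) :
    ∫ x in (0 : ℝ)..c, f x = (2 : ℝ) • ∫ x in (0 : ℝ)..(c / 2), f x := by
  have hf' : IntervalIntegrable f volume (c / 2) c := by
    simpa only [hrefl, sub_zero, sub_half] using (hf.comp_sub_left c).symm
  have hhalf : ∫ x in (c / 2)..c, f x = ∫ x in (0 : ℝ)..(c / 2), f x := by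
    simpa only [hrefl, sub_zero, sub_half] using
      (intervalIntegral.integral_comp_sub_left (a := 0) (b := c / 2) f c).symm
  rw [← intervalIntegral.integral_add_adjacent_intervals hf hf', hhalf, two_smul]

lemma integral_eq_four_smul_of_even_of_reflect {c : ℝ}
    (hf : ∀ x y, IntervalIntegrable f volume x y)
    (heven : ∀ x, f (-x) = f x) (hrefl : ∀ x, f (c - x) = f x) :
    ∫ x in (0 : ℝ)..(2 * c), f x = (4 : ℝ) • ∫ x in (0 : ℝ)..(c / 2), f x := by
  have htwo := (periodic_of_even_of_reflect heven hrefl).intervalIntegral_add_zsmul_eq 2 0 hf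
  simp only [zero_add, ← Int.cast_smul_eq_zsmul ℝ, Int.cast_ofNat, smul_eq_mul] at htwo
  rw [htwo, integral_eq_two_smul_of_reflect (hf _ _) hrefl, smul_smul]
  norm_num

lemma eqOn_zero_of_forall_integral_eq_zero [CompleteSpace E] {a b : ℝ} (hab : a < b)
    (hf : ContinuousOn f (Set.Icc a b)) (h : ∀ x ∈ Set.Ioo a b, ∫ y in x..b, f y = 0) :
    Set.EqOn f 0 (Set.Icc a b) := by
  have hIoo : Set.EqOn f 0 (Set.Ioo a b) := fun x hx => by
    have hint : IntervalIntegrable f volume x b :=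
      (hf.mono (Set.Icc_subset_Icc_left hx.1.le)).intervalIntegrable_of_Icc hx.2.le
    have hderiv : HasDerivAt (fun z => ∫ y in z..b, f y) (-f x) x :=
      intervalIntegral.integral_hasDerivAt_left hint
        ((hf.mono Set.Ioo_subset_Icc_self).stronglyMeasurableAtFilter isOpen_Ioo x hx)
        (hf.continuousAt (Icc_mem_nhds hx.1 hx.2))
    have hconst : (fun z => ∫ y in z..b, f y) =ᶠ[nhds x] fun _ => 0 := by
      filter_upwards [Ioo_mem_nhds hx.1 hx.2] using h
    exact neg_eq_zero.1 (hderiv.unique ((hasDerivAt_const x 0).congr_of_eventuallyEq hconst))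
  exact hIoo.of_subset_closure hf continuousOn_const Set.Ioo_subset_Icc_self
    (closure_Ioo hab.ne).ge

end Symmetry

section SublevelCosSq

lemma strictAntiOn_cos_sq : StrictAntiOn (fun ϑ => Real.cos ϑ ^ 2) (Set.Icc 0 (π / 2)) :=
  fun x hx y hy hxy => by
    have hcos : Real.cos y < Real.cos x :=
      Real.cos_lt_cos_of_nonneg_of_le_pi hx.1 (by linarith [hy.2, pi_pos]) hxy
    have hnonneg : 0 ≤ Real.cos y := Real.cos_nonneg_of_mem_Icc ⟨by linarith [hy.1, pi_pos], hy.2⟩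
    exact pow_lt_pow_left₀ hcos hnonneg two_ne_zero

lemma cos_sq_mem_Ioo {ϑ : ℝ} (hϑ : ϑ ∈ Set.Ioo 0 (π / 2)) :
    Real.cos ϑ ^ 2 ∈ Set.Ioo (0 : ℝ) 1 := by
  have hle : (0 : ℝ) ≤ π / 2 := by positivity
  constructor
  · simpa using strictAntiOn_cos_sq (Set.Ioo_subset_Icc_self hϑ) (Set.right_mem_Icc.2 hle) hϑ.2
  · simpa using strictAntiOn_cos_sq (Set.left_mem_Icc.2 hle) (Set.Ioo_subset_Icc_self hϑ) hϑ.1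

lemma Ioc_inter_sublevel_cos_sq {ϑ : ℝ} (hϑ : ϑ ∈ Set.Icc 0 (π / 2)) :
    Set.Ioc 0 (π / 2) ∩ {x | Real.cos x ^ 2 < Real.cos ϑ ^ 2} = Set.Ioc ϑ (π / 2) := by
  ext x
  constructor
  · rintro ⟨hx, hlt⟩
    exact ⟨(strictAntiOn_cos_sq.lt_iff_gt (Set.Ioc_subset_Icc_self hx) hϑ).1 hlt, hx.2⟩
  · intro hx
    have hx' : x ∈ Set.Ioc 0 (π / 2) := ⟨hϑ.1.trans_lt hx.1, hx.2⟩
    exact ⟨hx', strictAntiOn_cos_sq hϑ (Set.Ioc_subset_Icc_self hx') hx.1⟩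

variable {E : Type*} [NormedAddCommGroup E] [NormedSpace ℝ E] {g : ℝ → E}

lemma setIntegral_sublevel_cos_sq (hg : Continuous g) (heven : ∀ ϑ, g (-ϑ) = g ϑ)
    (hsym : ∀ ϑ, g (π - ϑ) = g ϑ) {ϑ : ℝ} (hϑ : ϑ ∈ Set.Icc 0 (π / 2)) :
    ∫ x in Set.Ico 0 (2 * π) ∩ {x | Real.cos x ^ 2 < Real.cos ϑ ^ 2}, g x =
      (4 : ℝ) • ∫ x in ϑ..(π / 2), g x := by
  set S : Set ℝ := {x | Real.cos x ^ 2 < Real.cos ϑ ^ 2}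
  have hS : MeasurableSet S := measurableSet_lt (by fun_prop) measurable_const
  have hint (x y : ℝ) : IntervalIntegrable (S.indicator g) volume x y :=
    intervalIntegrable_iff.2 ((intervalIntegrable_iff.1 (hg.intervalIntegrable x y)).indicator hS)
  have hquarter : ∫ x in (0 : ℝ)..(2 * π), S.indicator g x =
      (4 : ℝ) • ∫ x in (0 : ℝ)..(π / 2), S.indicator g x :=
    integral_eq_four_smul_of_even_of_reflect hint
      (fun x => by simp [S, Set.indicator, heven]) (fun x => by simp [S, Set.indicator, hsym])
  rw [intervalIntegral.integral_of_le (by positivity), intervalIntegral.integral_of_le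
    (by positivity), setIntegral_indicator hS, setIntegral_indicator hS,
    Ioc_inter_sublevel_cos_sq hϑ, ← intervalIntegral.integral_of_le hϑ.2] at hquarter
  rw [← hquarter]
  exact setIntegral_congr_set (Ico_ae_eq_Ioc.inter Filter.EventuallyEq.rfl)

lemma eq_zero_of_abelTransform_cos_sq_eq_zero [CompleteSpace E] {s : ℝ} (hs : s ∈ Set.Ioo 0 1)
    (hg : Continuous g) (heven : ∀ ϑ, g (-ϑ) = g ϑ) (hsym : ∀ ϑ, g (π - ϑ) = g ϑ)
    (h : ∀ α ∈ Set.Ioo (0 : ℝ) 1, abelTransform s (volume.restrict (Set.Ico 0 (2 * π)))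
      (fun ϑ => Real.cos ϑ ^ 2) g α = 0) :
    g = 0 := by
  have hgint : IntegrableOn g (Set.Ico 0 (2 * π)) :=
    (hg.integrableOn_Icc).mono_set Set.Ico_subset_Icc_self
  have hcos : Measurable fun ϑ => Real.cos ϑ ^ 2 := by fun_prop
  refine eq_zero_of_eqOn_zero_of_even_of_reflect pi_pos heven hsym
    (eqOn_zero_of_forall_integral_eq_zero (by positivity) hg.continuousOn fun ϑ hϑ => ?_)
  have hvanish : ∀ α < Real.cos ϑ ^ 2, abelTransform s (volume.restrict (Set.Ico 0 (2 * π)))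
      (fun ϑ => Real.cos ϑ ^ 2) g α = 0 := fun α hα => by
    rcases le_or_gt α 0 with hα0 | hα0
    · exact abelTransform_eq_zero_of_forall_le fun x => hα0.trans (sq_nonneg _)
    · exact h α ⟨hα0, hα.trans (cos_sq_mem_Ioo hϑ).2⟩
  have hsublevel := setIntegral_sublevel_eq_zero_of_abelTransform_eq_zero hs hcos hgint hvanish
  rw [Measure.restrict_restrict (measurableSet_lt hcos measurable_const), Set.inter_comm,
    setIntegral_sublevel_cos_sq hg heven hsym (Set.Ioo_subset_Icc_self hϑ)] at hsublevel
  exact (smul_eq_zero.1 hsublevel).resolve_left four_ne_zero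

end SublevelCosSq

lemma one_lt_sq_div_sqrt_sq_sub_sq_sq {a b : ℝ} (hb : 0 < b) (hab : b < a) :
    1 < a ^ 2 / √(a ^ 2 - b ^ 2) ^ 2 := by
  have hpos : 0 < a ^ 2 - b ^ 2 := sub_pos.2 (pow_lt_pow_left₀ hab hb.le two_ne_zero)
  rw [Real.sq_sqrt hpos.le, one_lt_div hpos]
  exact sub_lt_self _ (by positivity)

theorem rigidity_inside_separatrix_general {E : Type*} [NormedAddCommGroup E] [NormedSpace ℝ E]
    [CompleteSpace E] {s : ℝ} (hs : s ∈ Set.Ioo 0 1) {w : ℝ → ℝ}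
    (hw : ContinuousOn w (Set.Icc 0 1)) (hw₀ : ∀ x ∈ Set.Icc 0 1, w x ≠ 0)
    {r : ℝ → E} (hr : Continuous r) (heven : ∀ ϑ, r (-ϑ) = r ϑ) (hsym : ∀ ϑ, r (π - ϑ) = r ϑ)
    (h : ∀ α ∈ Set.Ioo (0 : ℝ) 1,
      ∫ ϑ in {ϑ : ℝ | ϑ ∈ Set.Ico 0 (2 * π) ∧ Real.cos ϑ ^ 2 < α},
        (α - Real.cos ϑ ^ 2) ^ (-s) • w (Real.cos ϑ ^ 2) • r ϑ = 0)
    (ϑ : ℝ) : r ϑ = 0 := by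
  have hmem (ϑ : ℝ) : Real.cos ϑ ^ 2 ∈ Set.Icc (0 : ℝ) 1 := ⟨sq_nonneg _, Real.cos_sq_le_one ϑ⟩
  have hcos : Measurable fun ϑ => Real.cos ϑ ^ 2 := by fun_prop
  have hwr : (fun ϑ => w (Real.cos ϑ ^ 2) • r ϑ) = 0 := by
    refine eq_zero_of_abelTransform_cos_sq_eq_zero (s := 1 - s)
      ⟨sub_pos.2 hs.2, sub_lt_self _ hs.1⟩ ((hw.comp_continuous (by fun_prop) hmem).smul hr)
      (fun ϑ => by simp only [Real.cos_neg, heven])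
      (fun ϑ => by simp only [Real.cos_pi_sub, neg_sq, hsym]) fun α hα => ?_
    rw [abelTransform_eq_inv_Gamma_smul_setIntegral _ _ hcos, sub_sub_cancel_left,
      Measure.restrict_restrict (measurableSet_lt hcos measurable_const), Set.inter_comm]
    exact smul_eq_zero_of_right _ (h α hα)
  exact (smul_eq_zero.1 (congrFun hwr ϑ)).resolve_left (hw₀ _ (hmem ϑ))

/-- Infinitesimal spectral rigidity of the ellipse using invariant curves inside
the separatrix: if all the weighted Leray averages of a `ℤ₂ × ℤ₂`-symmetric
boundary variation `r` over the invariant curves `{I = α}`, `0 < α < 1`, vanish,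
then `r = 0`. -/
theorem rigidity_inside_separatrix
    (a b c β : ℝ) (hab : b < a) (hb : 0 < b)
    (hc : c = Real.sqrt (a ^ 2 - b ^ 2)) (hβ : β = a ^ 2 / c ^ 2)
    (r : ℝ → ℝ) (hr : Continuous r)
    (hper : Function.Periodic r (2 * π))
    (heven : ∀ ϑ : ℝ, r (-ϑ) = r ϑ)
    (hsym : ∀ ϑ : ℝ, r (π - ϑ) = r ϑ)
    (h : ∀ α ∈ Set.Ioo (0 : ℝ) 1,
      ∫ ϑ in {ϑ : ℝ | ϑ ∈ Set.Ico 0 (2 * π) ∧ Real.cos ϑ ^ 2 < α},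
        r ϑ * (β - Real.cos ϑ ^ 2) ^ (-(1/2 : ℝ)) *
          (α - Real.cos ϑ ^ 2) ^ (-(1/2 : ℝ)) = 0) :
    ∀ ϑ : ℝ, r ϑ = 0 := by
  have hβ1 : 1 < β := by
    rw [hβ, hc]
    exact one_lt_sq_div_sqrt_sq_sub_sq_sq hb hab
  have hpos : ∀ x ∈ Set.Icc (0 : ℝ) 1, 0 < β - x := fun x hx => sub_pos.2 (hx.2.trans_lt hβ1)
  refine rigidity_inside_separatrix_general (s := 1 / 2) (w := fun x => (β - x) ^ (-(1/2 : ℝ)))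
    (by norm_num) (.rpow_const (by fun_prop) fun x hx => .inl (hpos x hx).ne')
    (fun x hx => (rpow_pos_of_pos (hpos x hx) _).ne') hr heven hsym fun α hα => ?_
  simpa only [smul_eq_mul, mul_comm] using h α hα
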